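/- arXiv:1910.08704 — 4 statements merged into one kernel-verified Lean document; each statement's English description precedes it below -/
import Mathlib

section
/- Let W ∈ ℝ^{N×N} be a matrix, α > 0, and let (x_k), (y_k), (g_k) be sequences in ℝ^N satisfying x_{k+1} = W x_k − α y_k and y_{k+1} = W y_k + g_{k+1} − g_k for all k ≥ 0, with initializations x_0 = 0 and y_0 = g_0. Then for all k ≥ 0, x_{k+1} = W² x_k − α g_k − Σ_{s=0}^{k} (I − W)² x_s. -/
/-! Eliminating `y` through `α y_k = W x_k - x_{k+1}` gives the second-order recursion
`x_{k+2} = 2 W x_{k+1} - W² x_k - α (g_{k+1} - g_k)`. Since `2 W = I + W² - (I - W)²`, it says that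
`x_{k+2} - x_{k+1}` equals the increment of the claimed right-hand side, so the formula follows by
induction from `x_1 = -α g_0`. -/

open Matrix Finset

theorem stmt_3 {N : ℕ} (W : Matrix (Fin N) (Fin N) ℝ) (α : ℝ) (hα : 0 < α)
    (x y g : ℕ → Fin N → ℝ)
    (hx : ∀ k : ℕ, x (k + 1) = W.mulVec (x k) - α • y k)
    (hy : ∀ k : ℕ, y (k + 1) = W.mulVec (y k) + g (k + 1) - g k)
    (hx0 : x 0 = 0) (hy0 : y 0 = g 0) :
    ∀ k : ℕ,
      x (k + 1) = (W * W).mulVec (x k) - α • g k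
        - ∑ s ∈ Finset.range (k + 1), ((1 - W) * (1 - W)).mulVec (x s) := by
  intro k
  induction k with
  | zero => simp [hx, hx0, hy0]
  | succ k ih =>
    have hα_y : α • y k = W.mulVec (x k) - x (k + 1) := by rw [hx k]; abel
    have hrec : x (k + 2) = W.mulVec (x (k + 1)) - (W * W).mulVec (x k)
        + W.mulVec (x (k + 1)) - α • g (k + 1) + α • g k := by
      rw [hx (k + 1), hy k, smul_sub, smul_add, ← Matrix.mulVec_smul, hα_y, Matrix.mulVec_sub,
        Matrix.mulVec_mulVec]
      abel
    have hsq : ((1 - W) * (1 - W)).mulVec (x (k + 1))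
        = x (k + 1) - W.mulVec (x (k + 1)) - W.mulVec (x (k + 1))
          + (W * W).mulVec (x (k + 1)) := by
      rw [show (1 - W) * (1 - W) = 1 - W - W + W * W by noncomm_ring, Matrix.add_mulVec,
        Matrix.sub_mulVec, Matrix.sub_mulVec, Matrix.one_mulVec]
    have hsum : ∑ s ∈ Finset.range (k + 1), ((1 - W) * (1 - W)).mulVec (x s)
        = (W * W).mulVec (x k) - α • g k - x (k + 1) := by
      rw [ih]; abel
    rw [Finset.sum_range_succ, hsum, hsq, hrec]
    abel
end

section
/- Let W ∈ ℝ^{N×N} be a matrix, α > 0, and let (x_k), (y_k), (g_k) be sequences in ℝ^N satisfying x_{k+1} = W x_k − α y_k and y_{k+1} = W y_k + g_{k+1} − g_k for all k ≥ 0, with x_0 = 0 and y_0 = g_0. Define λ_k := Σ_{s=0}^{k} (I − W) x_s. Then λ_0 = 0 and for all k ≥ 0: x_{k+1} = W² x_k − α g_k − (I − W) λ_k and λ_{k+1} = λ_k + (I − W) x_{k+1}; that is, the S-DIGing iterates coincide with the iterates of the stochastic-gradient primal–dual algorithm (16) with L = I − W, x_0 = 0 and λ_0 = 0. -/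
open Matrix Finset

/-!
Only the first recursion needs an argument. Write `L = 1 - W`. Eliminating `y` from the coupled
recursions gives the second-order recursion
`x (k + 2) = 2 W x (k + 1) - W² x k - α (g (k + 1) - g k)`. Taking differences of the primal–dual
update in `k` gives the same recursion, since `lam (k + 1) - lam k = L x (k + 1)` and
`W² - L² = 2 W - 1`. Both sides start from `x 1 = -α g 0`, so induction on `k` concludes.
-/

theorem stmt_4 {N : ℕ} (W : Matrix (Fin N) (Fin N) ℝ) (α : ℝ) (hα : 0 < α)
    (x y g : ℕ → Fin N → ℝ)
    (hx : ∀ k : ℕ, x (k + 1) = W.mulVec (x k) - α • y k)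
    (hy : ∀ k : ℕ, y (k + 1) = W.mulVec (y k) + g (k + 1) - g k)
    (hx0 : x 0 = 0) (hy0 : y 0 = g 0)
    (lam : ℕ → Fin N → ℝ)
    (hlam : ∀ k : ℕ, lam k = ∑ s ∈ Finset.range (k + 1), (1 - W).mulVec (x s)) :
    lam 0 = 0 ∧
    ∀ k : ℕ,
      x (k + 1) = (W * W).mulVec (x k) - α • g k - (1 - W).mulVec (lam k) ∧
      lam (k + 1) = lam k + (1 - W).mulVec (x (k + 1)) := by
  have h0 : lam 0 = 0 := by simp [hlam, hx0]
  have hl : ∀ k, lam (k + 1) = lam k + (1 - W).mulVec (x (k + 1)) := fun k => by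
    rw [hlam (k + 1), hlam k, Finset.sum_range_succ]
  refine ⟨h0, fun k => ⟨?_, hl k⟩⟩
  induction k with
  | zero => simp [hx 0, hx0, hy0, h0]
  | succ k ih =>
    have hαy : α • y k = W.mulVec (x k) - x (k + 1) := by rw [hx k]; abel
    have hrec : x (k + 1 + 1) = W.mulVec (x (k + 1))
        - (W.mulVec (W.mulVec (x k) - x (k + 1)) + α • g (k + 1) - α • g k) := by
      rw [hx (k + 1), hy k, smul_sub, smul_add, ← mulVec_smul, hαy]
    rw [hrec, hl k]
    simp only [← mulVec_mulVec, mulVec_add, mulVec_sub, sub_mulVec, one_mulVec] at ih ⊢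
    -- The sum `lam k - W lam k` on the right is eliminated through the induction hypothesis.
    linear_combination ih
end

section
/- (Lemma 2) For each i = 1,…,m and h = 1,…,q_i let f_i^h : ℝⁿ → ℝ be differentiable, μ-strongly convex with L_f-Lipschitz gradient (0 < μ < L_f), let f_i := (1/q_i) Σ_h f_i^h, and let x̃* ∈ ℝⁿ be the minimizer of Σ_i f_i. For any points x^i ∈ ℝⁿ and z^{i,h} ∈ ℝⁿ, with x := (x¹,…,x^m) ∈ ℝ^{mn} and x* := (x̃*,…,x̃*) ∈ ℝ^{mn}, the expected squared deviation of the stochastic averaging gradient from the optimal gradient satisfies: Σ_{i=1}^m (1/q_i) Σ_{t=1}^{q_i} ‖ ∇f_i^t(x^i) − ∇f_i^t(z^{i,t}) + (1/q_i) Σ_{h=1}^{q_i} ∇f_i^h(z^{i,h}) − ∇f_i(x̃*) ‖² ≤ 4 L_f p + 2 (2L_f − μ) ( F(x) − F(x*) − ⟨∇F(x*), x − x*⟩ ), where p := Σ_{i=1}^m (1/q_i) Σ_{h=1}^{q_i} ( f_i^h(z^{i,h}) − f_i^h(x̃*) − ⟨∇f_i^h(x̃*), z^{i,h} − x̃*⟩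 ), F(x) := Σ_i f_i(x^i) and ∇F(x) := (∇f_1(x¹),…,∇f_m(x^m)). -/
/-!
For each `i`, put `a t = ∇f_i^t (x^i) - ∇f_i^t (x̃*)` and `c t = ∇f_i^t (z^{i,t}) - ∇f_i^t (x̃*)`,
with averages `ā`, `c̄` over `t`. The quantity to bound is the mean of `‖a t - (c t - c̄)‖²`.
Since `c t - c̄` has mean zero, splitting off the mean `ā` and using `‖u - v‖² ≤ 2‖u‖² + 2‖v‖²` for
the centred parts gives the bound
`2 · mean ‖a‖² - ‖ā‖² + 2 · mean ‖c‖²` (`sum_sq_dev_le`).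

Write `D(a, b) = g a - g b - ⟪∇g b, a - b⟫` for the Bregman divergence of `g`. The two ingredients are
* `‖∇g a - ∇g b‖² ≤ 2 L D(a, b)` for convex `g` with `L`-Lipschitz gradient
  (`sq_grad_sub_le`), applied to every `f_i^t` at `x^i` and at `z^{i,t}`;
* `2 μ D(a, b) ≤ ‖∇g a - ∇g b‖²` for `μ`-strongly convex `g`
  (`two_mul_bregman_le`), applied to the average `f_i`, whose gradient difference is `ā`.

The second one is what turns `4 L` into `2 (2 L - μ)`. The inequality holds for each `i` separately
(`local_bound`), and the theorem is the sum over `i`.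
-/

open Matrix Finset RealInnerProductSpace

section Bregman

variable {E : Type*} [NormedAddCommGroup E] [InnerProductSpace ℝ E] [CompleteSpace E]

/-- Strong monotonicity of the gradient integrates to a quadratic lower bound on the Bregman
divergence. The constant `m` may have any sign; a negative `m` applied to `-g` yields the
descent lemma. -/
lemma half_mul_sq_le_bregman {g : E → ℝ} {G : E → E} (hg : ∀ y, HasGradientAt g (G y) y) {m : ℝ}
    (hm : ∀ a b, m * ‖a - b‖ ^ 2 ≤ ⟪G a - G b, a - b⟫) (a b : E) :
    m / 2 * ‖a - b‖ ^ 2 ≤ g a - g b - ⟪G b, a - b⟫ := by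
  set v := a - b with hv
  have hline : ∀ t : ℝ, HasDerivAt (fun t : ℝ => b + t • v) v t := fun t => by
    simpa using ((hasDerivAt_id t).smul_const v).const_add b
  have hd : ∀ t : ℝ, HasDerivAt
      (fun t : ℝ => g (b + t • v) - t * ⟪G b, v⟫ - t ^ 2 * (m / 2 * ‖v‖ ^ 2))
      (⟪G (b + t • v), v⟫ - ⟪G b, v⟫ - 2 * t * (m / 2 * ‖v‖ ^ 2)) t := fun t => by
    have h1 : HasDerivAt (fun t : ℝ => g (b + t • v)) ⟪G (b + t • v), v⟫ t := by
      have h := (hg (b + t • v)).hasFDerivAt.comp_hasDerivAt t (hline t)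
      rwa [InnerProductSpace.toDual_apply_apply] at h
    have h2 := (hasDerivAt_id t).mul_const ⟪G b, v⟫
    have h3 := ((hasDerivAt_id t).pow 2).mul_const (m / 2 * ‖v‖ ^ 2)
    refine ((h1.sub h2).sub h3).congr_deriv ?_
    simp
  have hmono := monotoneOn_of_deriv_nonneg (convex_Icc (0 : ℝ) 1)
    (fun t _ => (hd t).continuousAt.continuousWithinAt)
    (fun t _ => (hd t).differentiableAt.differentiableWithinAt)
    (fun t ht => by
      rw [interior_Icc] at ht
      rw [(hd t).deriv]
      have h := hm (b + t • v) b
      rw [add_sub_cancel_left, norm_smul, Real.norm_eq_abs, mul_pow, sq_abs, inner_smul_right,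
        inner_sub_left] at h
      refine nonneg_of_mul_nonneg_right ?_ ht.1
      nlinarith)
  have h := hmono (Set.left_mem_Icc.2 zero_le_one) (Set.right_mem_Icc.2 zero_le_one) zero_le_one
  simp only [zero_smul, add_zero, one_smul, hv, add_sub_cancel] at h
  simp only [hv]
  linarith

/-- The descent lemma: a Lipschitz gradient bounds the Bregman divergence from above. -/
lemma bregman_le_half_mul_sq {g : E → ℝ} {G : E → E} (hg : ∀ y, HasGradientAt g (G y) y) {L : ℝ}
    (hL : ∀ a b, ‖G a - G b‖ ≤ L * ‖a - b‖) (a b : E) :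
    g a - g b - ⟪G b, a - b⟫ ≤ L / 2 * ‖a - b‖ ^ 2 := by
  have hneg : ∀ y, HasGradientAt (fun y => -g y) (-G y) y := fun y => by
    rw [hasGradientAt_iff_hasFDerivAt, map_neg]
    exact (hg y).hasFDerivAt.neg
  have h := half_mul_sq_le_bregman (G := fun y => -G y) hneg (m := -L) (fun a b => by
    have h1 := real_inner_le_norm (G a - G b) (a - b)
    have h2 := mul_le_mul_of_nonneg_right (hL a b) (norm_nonneg (a - b))
    have h3 : -G a - -G b = -(G a - G b) := by abel
    rw [h3, inner_neg_left]
    nlinarith) a b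
  rw [inner_neg_left] at h
  linarith

/-- The gradient difference of a convex function with `L`-Lipschitz gradient is controlled by the
Bregman divergence. -/
lemma sq_grad_sub_le {g : E → ℝ} {G : E → E} (hg : ∀ y, HasGradientAt g (G y) y) {L : ℝ}
    (hL0 : 0 < L) (hmono : ∀ a b, 0 ≤ ⟪G a - G b, a - b⟫)
    (hL : ∀ a b, ‖G a - G b‖ ≤ L * ‖a - b‖) (a b : E) :
    ‖G a - G b‖ ^ 2 ≤ 2 * L * (g a - g b - ⟪G b, a - b⟫) := by
  set d := G a - G b with hd
  -- The test point `a - L⁻¹ • d` is a gradient step from `a` for `g - ⟪G b, ·⟫`, which `b` minimizes.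
  have h1 := half_mul_sq_le_bregman hg (m := 0) (by simpa using hmono) (a - L⁻¹ • d) b
  have h2 := bregman_le_half_mul_sq hg hL (a - L⁻¹ • d) a
  have e1 : a - L⁻¹ • d - a = -(L⁻¹ • d) := by abel
  have e2 : a - L⁻¹ • d - b = (a - b) - L⁻¹ • d := by abel
  have e3 : ‖d‖ ^ 2 = ⟪G a, d⟫ - ⟪G b, d⟫ := by
    rw [← inner_sub_left, ← hd, real_inner_self_eq_norm_sq]
  rw [e1, norm_neg, norm_smul, mul_pow, inner_neg_right, inner_smul_right, Real.norm_eq_abs,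
    sq_abs] at h2
  rw [e2, inner_sub_right, inner_smul_right] at h1
  have h3 : L⁻¹ * ‖d‖ ^ 2 - L / 2 * (L⁻¹ ^ 2 * ‖d‖ ^ 2) ≤ g a - g b - ⟪G b, a - b⟫ := by
    have : L⁻¹ * ‖d‖ ^ 2 = L⁻¹ * ⟪G a, d⟫ - L⁻¹ * ⟪G b, d⟫ := by rw [e3]; ring
    linarith
  have h4 : ‖d‖ ^ 2 = 2 * L * (L⁻¹ * ‖d‖ ^ 2 - L / 2 * (L⁻¹ ^ 2 * ‖d‖ ^ 2)) := by
    field_simp; ring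
  rw [h4]
  gcongr

/-- For a `μ`-strongly convex function the Bregman divergence is controlled by the gradient
difference (an inequality of Polyak–Łojasiewicz type). -/
lemma two_mul_bregman_le {g : E → ℝ} {G : E → E} (hg : ∀ y, HasGradientAt g (G y) y) {μ : ℝ}
    (hμ : 0 < μ) (hm : ∀ a b, μ * ‖a - b‖ ^ 2 ≤ ⟪G a - G b, a - b⟫) (a b : E) :
    2 * μ * (g a - g b - ⟪G b, a - b⟫) ≤ ‖G a - G b‖ ^ 2 := by
  have h1 := half_mul_sq_le_bregman hg hm b a
  have h2 := real_inner_le_norm (G a - G b) (a - b)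
  rw [inner_sub_left] at h2
  rw [norm_sub_rev, ← neg_sub a b, inner_neg_right] at h1
  have h3 : g a - g b - ⟪G b, a - b⟫ ≤ ‖G a - G b‖ * ‖a - b‖ - μ / 2 * ‖a - b‖ ^ 2 := by linarith
  nlinarith [mul_le_mul_of_nonneg_left h3 hμ.le, sq_nonneg (‖G a - G b‖ - μ * ‖a - b‖)]

end Bregman

/-- The variance decomposition: for families `a`, `c` with averages `ā`, `c̄`, the mean of
`‖a t - c t + c̄‖²` is at most `2 · mean ‖a‖² - ‖ā‖² + 2 · mean ‖c‖²`. -/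
lemma sum_sq_dev_le {E : Type*} [NormedAddCommGroup E] [InnerProductSpace ℝ E] {k : ℕ} (hk : 0 < k)
    (a c : Fin k → E) :
    (k : ℝ)⁻¹ * ∑ t, ‖a t - c t + (k : ℝ)⁻¹ • ∑ h, c h‖ ^ 2
      ≤ 2 * ((k : ℝ)⁻¹ * ∑ t, ‖a t‖ ^ 2) - ‖(k : ℝ)⁻¹ • ∑ t, a t‖ ^ 2
        + 2 * ((k : ℝ)⁻¹ * ∑ t, ‖c t‖ ^ 2) := by
  have hk' : (0 : ℝ) < k := by exact_mod_cast hk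
  set A := (k : ℝ)⁻¹ • ∑ t, a t with hA
  set C := (k : ℝ)⁻¹ • ∑ t, c t with hC
  have hsa : ∑ t, a t = (k : ℝ) • A := by rw [hA, smul_inv_smul₀ hk'.ne']
  have hsc : ∑ t, c t = (k : ℝ) • C := by rw [hC, smul_inv_smul₀ hk'.ne']
  -- The parallelogram inequality for the centred parts `a t - A` and `c t - C`, expanded so that
  -- the mixed terms are linear in `a t` and `c t`.
  have hpt : ∀ t, ‖a t - c t + C‖ ^ 2 ≤ 2 * ‖a t‖ ^ 2 + 2 * ‖c t‖ ^ 2 - 2 * ⟪A, a t⟫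
      - 2 * ⟪A, c t⟫ - 4 * ⟪C, c t⟫ + ‖A‖ ^ 2 + 2 * ⟪A, C⟫ + 2 * ‖C‖ ^ 2 := fun t => by
    have h := sq_nonneg ‖(a t - A) + (c t - C)‖
    simp only [← real_inner_self_eq_norm_sq, inner_add_left, inner_add_right, inner_sub_left,
      inner_sub_right] at h ⊢
    linarith [real_inner_comm A (a t), real_inner_comm A (c t), real_inner_comm A C,
      real_inner_comm (a t) (c t), real_inner_comm C (a t), real_inner_comm C (c t)]
  have hsum := Finset.sum_le_sum (fun t (_ : t ∈ Finset.univ) => hpt t)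
  simp only [Finset.sum_add_distrib, Finset.sum_sub_distrib, ← Finset.mul_sum, ← inner_sum, hsa,
    hsc, inner_smul_right, real_inner_self_eq_norm_sq, Finset.sum_const, Finset.card_univ,
    Fintype.card_fin, nsmul_eq_mul] at hsum
  have hkC : ⟪A, k • C⟫ = (k : ℝ) * ⟪A, C⟫ := by
    rw [← Nat.cast_smul_eq_nsmul ℝ k C, real_inner_smul_right]
  rw [hkC] at hsum
  have h := mul_le_mul_of_nonneg_left hsum (inv_pos.2 hk').le
  refine h.trans ?_
  have hC0 := mul_nonneg hk'.le (sq_nonneg ‖C‖)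
  clear_value A C
  field_simp
  linarith

/-- The asserted bound for a single index `i`, with an arbitrary reference point `y`. -/
lemma local_bound {E : Type*} [NormedAddCommGroup E] [InnerProductSpace ℝ E] [CompleteSpace E]
    {k : ℕ} (hk : 0 < k) (f : Fin k → E → ℝ) {μ L : ℝ} (hμ : 0 < μ) (hμL : μ < L)
    (hdiff : ∀ h, Differentiable ℝ (f h))
    (hsc : ∀ h a b, μ * ‖a - b‖ ^ 2 ≤ ⟪gradient (f h) a - gradient (f h) b, a - b⟫)
    (hlip : ∀ h a b, ‖gradient (f h) a - gradient (f h) b‖ ≤ L * ‖a - b‖)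
    (y x : E) (z : Fin k → E) :
    (k : ℝ)⁻¹ * ∑ t, ‖gradient (f t) x - gradient (f t) (z t)
          + (k : ℝ)⁻¹ • (∑ h, gradient (f h) (z h))
          - gradient (fun y => (k : ℝ)⁻¹ * ∑ h, f h y) y‖ ^ 2
      ≤ 4 * L * ((k : ℝ)⁻¹ * ∑ h, (f h (z h) - f h y - ⟪gradient (f h) y, z h - y⟫))
        + 2 * (2 * L - μ) *
          ((k : ℝ)⁻¹ * ∑ h, f h x - (k : ℝ)⁻¹ * ∑ h, f h y
            - ⟪gradient (fun y => (k : ℝ)⁻¹ * ∑ h, f h y) y, x - y⟫) := by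
  have hk' : (0 : ℝ) < k := by exact_mod_cast hk
  have hki : (0 : ℝ) ≤ (k : ℝ)⁻¹ := (inv_pos.2 hk').le
  have hg : ∀ h w, HasGradientAt (f h) (gradient (f h) w) w := fun h w =>
    (hdiff h w).hasGradientAt
  set G : E → E := fun w => (k : ℝ)⁻¹ • ∑ h, gradient (f h) w with hG
  have hgavg : ∀ w, HasGradientAt (fun y => (k : ℝ)⁻¹ * ∑ h, f h y) (G w) w := fun w => by
    rw [hasGradientAt_iff_hasFDerivAt, hG, map_smul, map_sum]
    exact (HasFDerivAt.fun_sum fun h _ => (hg h w).hasFDerivAt).const_mul _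
  have hscavg : ∀ a b, μ * ‖a - b‖ ^ 2 ≤ ⟪G a - G b, a - b⟫ := fun a b => by
    have h1 := Finset.sum_le_sum (fun h (_ : h ∈ Finset.univ) => hsc h a b)
    rw [← sum_inner, Finset.sum_const, Finset.card_univ, Fintype.card_fin, nsmul_eq_mul] at h1
    have h2 := mul_le_mul_of_nonneg_left h1 hki
    rw [inv_mul_cancel_left₀ hk'.ne'] at h2
    rwa [hG, ← smul_sub, ← Finset.sum_sub_distrib, real_inner_smul_left]
  have hmono : ∀ h a b, 0 ≤ ⟪gradient (f h) a - gradient (f h) b, a - b⟫ := fun h a b =>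
    (mul_nonneg hμ.le (sq_nonneg _)).trans (hsc h a b)
  have hco : ∀ h a, ‖gradient (f h) a - gradient (f h) y‖ ^ 2
      ≤ 2 * L * (f h a - f h y - ⟪gradient (f h) y, a - y⟫) := fun h a =>
    sq_grad_sub_le (hg h) (hμ.trans hμL) (hmono h) (hlip h) a y
  rw [(hgavg y).gradient]
  have hvar := sum_sq_dev_le hk (fun t => gradient (f t) x - gradient (f t) y)
    (fun t => gradient (f t) (z t) - gradient (f t) y)
  have hmean : (k : ℝ)⁻¹ • ∑ t, (gradient (f t) x - gradient (f t) y) = G x - G y := by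
    rw [hG, ← smul_sub, ← Finset.sum_sub_distrib]
  have hpl := two_mul_bregman_le hgavg hμ hscavg x y
  have hx : (k : ℝ)⁻¹ * ∑ t, ‖gradient (f t) x - gradient (f t) y‖ ^ 2
      ≤ 2 * L * ((k : ℝ)⁻¹ * ∑ h, f h x - (k : ℝ)⁻¹ * ∑ h, f h y - ⟪G y, x - y⟫) := by
    refine (mul_le_mul_of_nonneg_left
      (Finset.sum_le_sum fun t (_ : t ∈ Finset.univ) => hco t x) hki).trans_eq ?_
    rw [← Finset.mul_sum, Finset.sum_sub_distrib, Finset.sum_sub_distrib, ← sum_inner, hG,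
      real_inner_smul_left]
    ring
  have hz : (k : ℝ)⁻¹ * ∑ t, ‖gradient (f t) (z t) - gradient (f t) y‖ ^ 2
      ≤ 2 * L * ((k : ℝ)⁻¹ * ∑ h, (f h (z h) - f h y - ⟪gradient (f h) y, z h - y⟫)) := by
    refine (mul_le_mul_of_nonneg_left
      (Finset.sum_le_sum fun t (_ : t ∈ Finset.univ) => hco t (z t)) hki).trans_eq ?_
    rw [← Finset.mul_sum]
    ring
  have hlhs : ∀ t, gradient (f t) x - gradient (f t) (z t)
        + (k : ℝ)⁻¹ • (∑ h, gradient (f h) (z h)) - G y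
      = gradient (f t) x - gradient (f t) y - (gradient (f t) (z t) - gradient (f t) y)
        + (k : ℝ)⁻¹ • ∑ h, (gradient (f h) (z h) - gradient (f h) y) := fun t => by
    rw [Finset.sum_sub_distrib, smul_sub, hG]
    abel
  simp only [hlhs]
  rw [hmean] at hvar
  linarith

theorem stmt_6 {m n : ℕ} (q : Fin m → ℕ) (hq : ∀ i, 0 < q i)
    (f : (i : Fin m) → Fin (q i) → EuclideanSpace ℝ (Fin n) → ℝ)
    (μ Lf : ℝ) (hμ : 0 < μ) (hμLf : μ < Lf)
    (hdiff : ∀ i h, Differentiable ℝ (f i h))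
    (hsc : ∀ i h (a b : EuclideanSpace ℝ (Fin n)),
      μ * ‖a - b‖ ^ 2 ≤ ⟪gradient (f i h) a - gradient (f i h) b, a - b⟫)
    (hlip : ∀ i h (a b : EuclideanSpace ℝ (Fin n)),
      ‖gradient (f i h) a - gradient (f i h) b‖ ≤ Lf * ‖a - b‖)
    (xts : EuclideanSpace ℝ (Fin n))
    (hmin : ∀ y : EuclideanSpace ℝ (Fin n),
      ∑ i, (q i : ℝ)⁻¹ * ∑ h, f i h xts ≤ ∑ i, (q i : ℝ)⁻¹ * ∑ h, f i h y)
    (x : Fin m → EuclideanSpace ℝ (Fin n))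
    (z : (i : Fin m) → Fin (q i) → EuclideanSpace ℝ (Fin n)) :
    ∑ i, (q i : ℝ)⁻¹ * ∑ t, ‖gradient (f i t) (x i) - gradient (f i t) (z i t)
          + (q i : ℝ)⁻¹ • (∑ h, gradient (f i h) (z i h))
          - gradient (fun y => (q i : ℝ)⁻¹ * ∑ h, f i h y) xts‖ ^ 2
      ≤ 4 * Lf * (∑ i, (q i : ℝ)⁻¹ *
            ∑ h, (f i h (z i h) - f i h xts - ⟪gradient (f i h) xts, z i h - xts⟫))
        + 2 * (2 * Lf - μ) *
          ((∑ i, (q i : ℝ)⁻¹ * ∑ h, f i h (x i))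
            - (∑ i, (q i : ℝ)⁻¹ * ∑ h, f i h xts)
            - ∑ i, ⟪gradient (fun y => (q i : ℝ)⁻¹ * ∑ h, f i h y) xts, x i - xts⟫) := by
  rw [← Finset.sum_sub_distrib, ← Finset.sum_sub_distrib, Finset.mul_sum, Finset.mul_sum,
    ← Finset.sum_add_distrib]
  exact Finset.sum_le_sum fun i _ =>
    local_bound (hq i) (f i) hμ hμLf (hdiff i) (hsc i) (hlip i) xts (x i) (z i)
end

section
/- (Lemma 3) For each i = 1,…,m and h = 1,…,q_i let f_i^h : ℝⁿ → ℝ be differentiable, μ-strongly convex with L_f-Lipschitz gradient (0 < μ < L_f), let x̃* ∈ ℝⁿ be the minimizer of Σ_i (1/q_i) Σ_h f_i^h, and set q_min := min_i q_i, q_max := max_i q_i. For any points x^i ∈ ℝⁿ and z^{i,h} ∈ ℝⁿ, let p := Σ_{i=1}^m (1/q_i) Σ_{h=1}^{q_i} ψ_i^h(z^{i,h}), where ψ_i^h(z) := f_i^h(z) − f_i^h(x̃*) − ⟨∇f_i^h(x̃*), z − x̃*⟩. If each agent i replaces the entry of index t_i by x^i (i.e., z'^{i,t_i} := x^i and z'^{i,h}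 := z^{i,h} for h ≠ t_i) with t_i uniform on {1,…,q_i}, then the expectation of the updated quantity p' := Σ_i (1/q_i) Σ_h ψ_i^h(z'^{i,h}) satisfies E[p'] − p = Σ_{i=1}^m (1/q_i) Σ_{t=1}^{q_i} (1/q_i)[ Σ_{h≠t} ψ_i^h(z^{i,h}) + ψ_i^t(x^i) ] − p ≤ −(1/q_max) p + (L_f/(2 q_min)) ‖x − x*‖², where x := (x¹,…,x^m) and x* := (x̃*,…,x̃*) ∈ ℝ^{mn}. -/
/-!
Since the indices `t i` are uniform on the product `∏ i, Fin (q i)`, each summand of the expectation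
depends on a single coordinate and averages to its marginal (`average_pi_eval`).
Replacing one entry of the table `z i` at a uniformly chosen place changes the sum
`S = ∑ h, ψ (z h)` on average by `q⁻¹ * (∑ t, ψ t (x) - S)` (`average_replace`).
Convexity gives `0 ≤ ψ`, so the term `-S / q` is at most `-S / qmax`, and the descent lemma
`ψ (x) ≤ Lf / 2 * ‖x - x̃*‖ ^ 2` bounds the gain.
Both bounds on the Bregman distance come from the mean value theorem on the segment.
-/

open Matrix Finset RealInnerProductSpace

/-- The Bregman distance of `f` at `xs`, evaluated at `z`:
`f z − f xs − ⟨∇f(xs), z − xs⟩`. -/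
noncomputable def bregman {n : ℕ} (f : EuclideanSpace ℝ (Fin n) → ℝ)
    (xs z : EuclideanSpace ℝ (Fin n)) : ℝ :=
  f z - f xs - ⟪gradient f xs, z - xs⟫

/-- The uniform average over a product of finite sets, of a function of the `i`-th coordinate, is
the uniform average over the `i`-th factor. -/
lemma average_pi_eval {m : ℕ} (q : Fin m → ℕ) (hq : ∀ i, 0 < q i) (i : Fin m)
    (F : Fin (q i) → ℝ) :
    (∏ j, (q j : ℝ))⁻¹ * ∑ t : (∀ j, Fin (q j)), F (t i) = (q i : ℝ)⁻¹ * ∑ s, F s := by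
  have hq0 : ∀ j, (q j : ℝ) ≠ 0 := fun j => by exact_mod_cast (hq j).ne.symm
  -- Expand the product of the marginal sums, where only the `i`-th factor carries `F`.
  let G : (j : Fin m) → Fin (q j) → ℝ :=
    Function.update (fun j _ => (q j : ℝ)⁻¹) i (fun s => (q i : ℝ)⁻¹ * F s)
  have hG : ∀ t : (∀ j, Fin (q j)),
      ∏ j, G j (t j) = (∏ j, (q j : ℝ))⁻¹ * F (t i) := by
    intro t
    have h1 : ∀ j, G j (t j) = (q j : ℝ)⁻¹ * (if j = i then F (t i) else 1) := by
      intro j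
      by_cases hj : j = i
      · subst hj; simp [G]
      · simp [G, hj]
    simp only [h1, Finset.prod_mul_distrib, Finset.prod_inv_distrib]
    simp
  have hL : ∏ j, ∑ s, G j s = (q i : ℝ)⁻¹ * ∑ s, F s := by
    rw [Fintype.prod_eq_single i]
    · simp [G, Finset.mul_sum]
    · intro j hj
      simp [G, hj, hq0 j]
  rw [← hL, Fintype.prod_sum, Finset.mul_sum]
  exact Finset.sum_congr rfl fun t _ => (hG t).symm

lemma average_replace {k : ℕ} (hk : 0 < k) {E : Type*} (ψ : Fin k → E → ℝ) (x : E)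
    (z : Fin k → E) :
    ∑ t : Fin k, (k : ℝ)⁻¹ * ∑ h, ψ h (if h = t then x else z h)
      = ∑ h, ψ h (z h) + (k : ℝ)⁻¹ * (∑ t, ψ t x - ∑ h, ψ h (z h)) := by
  have hk0 : (k : ℝ) ≠ 0 := by exact_mod_cast hk.ne'
  have h1 : ∀ t, ∑ h, ψ h (if h = t then x else z h)
      = ∑ h, ψ h (z h) + (ψ t x - ψ t (z t)) := by
    intro t
    have h2 : ∀ h, ψ h (if h = t then x else z h)
        = ψ h (z h) + (if h = t then ψ h x - ψ h (z h) else 0) := by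
      intro h
      split_ifs <;> ring
    simp [h2, Finset.sum_add_distrib]
  simp only [h1, ← Finset.mul_sum, Finset.sum_add_distrib, Finset.sum_sub_distrib,
    Finset.sum_const, Finset.card_univ, Fintype.card_fin, nsmul_eq_mul]
  field_simp

/-- Along the segment from `a` to `b`, the function whose increment is the Bregman distance has
derivative `⟪∇f(a + t(b - a)) - ∇f(a), b - a⟫`. -/
lemma hasDerivAt_bregman_line {n : ℕ} {f : EuclideanSpace ℝ (Fin n) → ℝ}
    (hf : Differentiable ℝ f) (a b : EuclideanSpace ℝ (Fin n)) (t : ℝ) :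
    HasDerivAt (fun s : ℝ => bregman f a (a + s • (b - a)))
      ⟪gradient f (a + t • (b - a)) - gradient f a, b - a⟫ t := by
  have hl : HasDerivAt (fun s : ℝ => a + s • (b - a)) (b - a) t := by
    simpa using ((hasDerivAt_id t).smul_const (b - a)).const_add a
  have hg := (hf (a + t • (b - a))).hasGradientAt.hasFDerivAt.comp_hasDerivAt t hl
  have hi : HasDerivAt (fun s : ℝ => s * ⟪gradient f a, b - a⟫) ⟪gradient f a, b - a⟫ t := by
    simpa using (hasDerivAt_id t).mul_const ⟪gradient f a, b - a⟫
  have h := (hg.sub_const (f a)).sub hi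
  have hv : ⟪gradient f (a + t • (b - a)) - gradient f a, b - a⟫
      = (InnerProductSpace.toDual ℝ (EuclideanSpace ℝ (Fin n))
          (gradient f (a + t • (b - a)))) (b - a) - ⟪gradient f a, b - a⟫ := by
    simp only [inner_sub_left, InnerProductSpace.toDual_apply_apply]
  rw [hv]
  refine h.congr_of_eventuallyEq (Filter.Eventually.of_forall fun s => ?_)
  simp [bregman, inner_smul_right]

lemma bregman_nonneg {n : ℕ} {f : EuclideanSpace ℝ (Fin n) → ℝ} (hf : Differentiable ℝ f)
    (hmono : ∀ a b, 0 ≤ ⟪gradient f a - gradient f b, a - b⟫)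
    (a b : EuclideanSpace ℝ (Fin n)) : 0 ≤ bregman f a b := by
  have hd := hasDerivAt_bregman_line hf a b
  obtain ⟨t, ht, h⟩ := exists_hasDerivAt_eq_slope _ _ zero_lt_one
    (fun s _ => (hd s).continuousAt.continuousWithinAt) (fun s _ => hd s)
  have h0 : bregman f a a = 0 := by simp [bregman]
  simp only [one_smul, zero_smul, add_zero, add_sub_cancel, h0, sub_zero, div_one] at h
  rw [← h]
  have h2 := hmono (a + t • (b - a)) a
  rw [add_sub_cancel_left, inner_smul_right] at h2
  exact nonneg_of_mul_nonneg_right h2 ht.1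

/-- The descent lemma. -/
lemma bregman_le {n : ℕ} {f : EuclideanSpace ℝ (Fin n) → ℝ} (hf : Differentiable ℝ f) {L : ℝ}
    (hlip : ∀ a b, ‖gradient f a - gradient f b‖ ≤ L * ‖a - b‖)
    (a b : EuclideanSpace ℝ (Fin n)) : bregman f a b ≤ L / 2 * ‖b - a‖ ^ 2 := by
  have hd : ∀ t : ℝ, HasDerivAt
      (fun s : ℝ => bregman f a (a + s • (b - a)) - s ^ 2 * (L / 2 * ‖b - a‖ ^ 2))
      (⟪gradient f (a + t • (b - a)) - gradient f a, b - a⟫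
        - 2 * t * (L / 2 * ‖b - a‖ ^ 2)) t := by
    intro t
    refine (hasDerivAt_bregman_line hf a b t).sub ?_
    simpa using (hasDerivAt_pow 2 t).mul_const (L / 2 * ‖b - a‖ ^ 2)
  obtain ⟨t, ht, h⟩ := exists_hasDerivAt_eq_slope _ _ zero_lt_one
    (fun s _ => (hd s).continuousAt.continuousWithinAt) (fun s _ => hd s)
  have h0 : bregman f a a = 0 := by simp [bregman]
  simp only [one_smul, zero_smul, add_zero, add_sub_cancel, h0, sub_zero, div_one, one_pow,
    one_mul, ne_eq, OfNat.ofNat_ne_zero, not_false_eq_true, zero_pow, zero_mul] at h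
  have h1 := hlip (a + t • (b - a)) a
  rw [add_sub_cancel_left, norm_smul, Real.norm_of_nonneg ht.1.le] at h1
  have h2 := real_inner_le_norm (gradient f (a + t • (b - a)) - gradient f a) (b - a)
  have h3 := mul_le_mul_of_nonneg_right h1 (norm_nonneg (b - a))
  nlinarith

theorem stmt_7 {m n : ℕ} (q : Fin m → ℕ) (hq : ∀ i, 0 < q i)
    (f : (i : Fin m) → Fin (q i) → EuclideanSpace ℝ (Fin n) → ℝ)
    (μ Lf : ℝ) (hμ : 0 < μ) (hμLf : μ < Lf)
    (hdiff : ∀ i h, Differentiable ℝ (f i h))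
    (hsc : ∀ i h (a b : EuclideanSpace ℝ (Fin n)),
      μ * ‖a - b‖ ^ 2 ≤ ⟪gradient (f i h) a - gradient (f i h) b, a - b⟫)
    (hlip : ∀ i h (a b : EuclideanSpace ℝ (Fin n)),
      ‖gradient (f i h) a - gradient (f i h) b‖ ≤ Lf * ‖a - b‖)
    (xts : EuclideanSpace ℝ (Fin n))
    (hmin : ∀ y : EuclideanSpace ℝ (Fin n),
      ∑ i, (q i : ℝ)⁻¹ * ∑ h, f i h xts ≤ ∑ i, (q i : ℝ)⁻¹ * ∑ h, f i h y)
    (qmin qmax : ℕ)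
    (hqmin : ∀ i, qmin ≤ q i) (hqmax : ∀ i, q i ≤ qmax)
    (hqminmem : ∃ i, q i = qmin) (hqmaxmem : ∃ i, q i = qmax)
    (x : Fin m → EuclideanSpace ℝ (Fin n))
    (z : (i : Fin m) → Fin (q i) → EuclideanSpace ℝ (Fin n))
    (p : ℝ) (hp : p = ∑ i, (q i : ℝ)⁻¹ * ∑ h, bregman (f i h) xts (z i h)) :
    ((∏ i, (q i : ℝ))⁻¹ * ∑ t : (∀ i, Fin (q i)),
        ∑ i, (q i : ℝ)⁻¹ * ∑ h, bregman (f i h) xts (if h = t i then x i else z i h)) - p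
      = (∑ i, (q i : ℝ)⁻¹ * ∑ t : Fin (q i), (q i : ℝ)⁻¹ *
          ∑ h, bregman (f i h) xts (if h = t then x i else z i h)) - p
    ∧ (∑ i, (q i : ℝ)⁻¹ * ∑ t : Fin (q i), (q i : ℝ)⁻¹ *
          ∑ h, bregman (f i h) xts (if h = t then x i else z i h)) - p
      ≤ -(qmax : ℝ)⁻¹ * p + Lf / (2 * (qmin : ℝ)) * ∑ i, ‖x i - xts‖ ^ 2 := by
  have hq0 : ∀ i, (0 : ℝ) < q i := fun i => by exact_mod_cast hq i
  have hL : 0 < Lf := hμ.trans hμLf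
  have hmin0 : (0 : ℝ) < qmin := by
    obtain ⟨i, hi⟩ := hqminmem
    exact hi ▸ hq0 i
  constructor
  · congr 1
    rw [Finset.sum_comm, Finset.mul_sum]
    refine Finset.sum_congr rfl fun i _ => ?_
    rw [← Finset.mul_sum, mul_left_comm, average_pi_eval q hq i
      (fun s => ∑ h, bregman (f i h) xts (if h = s then x i else z i h)), ← Finset.mul_sum]
  · rw [hp, Finset.mul_sum, Finset.mul_sum, ← Finset.sum_sub_distrib, ← Finset.sum_add_distrib]
    refine Finset.sum_le_sum fun i _ => ?_
    rw [average_replace (hq i) (fun h => bregman (f i h) xts)]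
    have hS : 0 ≤ ∑ h, bregman (f i h) xts (z i h) :=
      Finset.sum_nonneg fun h _ => bregman_nonneg (hdiff i h)
        (fun a b => (by positivity : 0 ≤ μ * ‖a - b‖ ^ 2).trans (hsc i h a b)) _ _
    have hX : ∑ h, bregman (f i h) xts (x i) ≤ q i * (Lf / 2 * ‖x i - xts‖ ^ 2) := by
      simpa using Finset.sum_le_card_nsmul Finset.univ _ _
        fun h _ => bregman_le (hdiff i h) (hlip i h) xts (x i)
    set S := ∑ h, bregman (f i h) xts (z i h)
    set X := ∑ h, bregman (f i h) xts (x i)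
    have hmx : (qmax : ℝ)⁻¹ ≤ (q i : ℝ)⁻¹ :=
      inv_anti₀ (hq0 i) (by exact_mod_cast hqmax i)
    have hmn : (q i : ℝ)⁻¹ ≤ (qmin : ℝ)⁻¹ :=
      inv_anti₀ hmin0 (by exact_mod_cast hqmin i)
    have hinv : 0 < (q i : ℝ)⁻¹ := inv_pos.2 (hq0 i)
    have h1 : (qmax : ℝ)⁻¹ * ((q i : ℝ)⁻¹ * S) ≤ (q i : ℝ)⁻¹ * ((q i : ℝ)⁻¹ * S) :=
      mul_le_mul_of_nonneg_right hmx (by positivity)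
    have h2 : (q i : ℝ)⁻¹ * X ≤ Lf / 2 * ‖x i - xts‖ ^ 2 :=
      (inv_mul_le_iff₀ (hq0 i)).2 hX
    have h3 : (q i : ℝ)⁻¹ * ((q i : ℝ)⁻¹ * X) ≤ (qmin : ℝ)⁻¹ * (Lf / 2 * ‖x i - xts‖ ^ 2) :=
      (mul_le_mul_of_nonneg_left h2 hinv.le).trans
        (mul_le_mul_of_nonneg_right hmn (by positivity))
    have h4 : Lf / (2 * (qmin : ℝ)) * ‖x i - xts‖ ^ 2
        = (qmin : ℝ)⁻¹ * (Lf / 2 * ‖x i - xts‖ ^ 2) := by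
      field_simp
    rw [h4]
    linarith
end
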